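/- Let L = 2m+1 ≥ 3 be an odd integer, let ζ_L = exp(2πi/L), and let Z be the L×L diagonal matrix with (Z)_{ii} = ζ_L^{m−i} for i = 0,…,L−1. Then for every integer k, (Z^k A^{F,L})^4 = I_L. -/

import Mathlib

open Matrix Polynomial

/-- The M-type Grover coin `A^{M,L}` for `L = 2m+1`: diagonal entries `-(2m-1)/L`,
off-diagonal entries `2/L`. -/
noncomputable def coinM (m : ℕ) : Matrix (Fin (2*m+1)) (Fin (2*m+1)) ℂ :=
  fun i j => if i = j then (1 - 2*(m:ℂ)) / (2*(m:ℂ)+1) else 2 / (2*(m:ℂ)+1)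

/-- The F-type Grover coin `A^{F,L}` for `L = 2m+1`: anti-diagonal entries `-(2m-1)/L`,
all other entries `2/L`. -/
noncomputable def coinF (m : ℕ) : Matrix (Fin (2*m+1)) (Fin (2*m+1)) ℂ :=
  fun i j => if (i : ℕ) + (j : ℕ) = 2*m then (1 - 2*(m:ℂ)) / (2*(m:ℂ)+1)
    else 2 / (2*(m:ℂ)+1)

/-- The time-evolution operator of the `L`-state (`L = 2m+1`) Grover walk with local coin `A`
on the cycle `C_N`: entry at `((v,i),(w,j))` is `A i j` if `v ≡ w + (i - m) (mod N)`,
and `0` otherwise. -/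
noncomputable def walkU (m N : ℕ) (A : Matrix (Fin (2*m+1)) (Fin (2*m+1)) ℂ) :
    Matrix ((ZMod N) × Fin (2*m+1)) ((ZMod N) × Fin (2*m+1)) ℂ :=
  fun p q => if p.1 = q.1 + ((p.2 : ℕ) : ZMod N) - (m : ZMod N) then A p.2 q.2 else 0

/-- `ζ_N = exp(2πi/N)`. -/
noncomputable def zetaN (N : ℕ) : ℂ := Complex.exp (2 * Real.pi * Complex.I / N)

/-- The diagonal matrix `Z = diag(ζ_N^m, ζ_N^{m-1}, …, ζ_N^{-m})`. -/
noncomputable def Zmat (N m : ℕ) : Matrix (Fin (2*m+1)) (Fin (2*m+1)) ℂ :=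
  Matrix.diagonal fun i => zetaN N ^ ((m : ℤ) - ((i : ℕ) : ℤ))

/-- The integer power `Z^k` of the diagonal matrix `Z`, defined for any `k ∈ ℤ`. -/
noncomputable def ZmatPow (N m : ℕ) (k : ℤ) : Matrix (Fin (2*m+1)) (Fin (2*m+1)) ℂ :=
  Matrix.diagonal fun i => zetaN N ^ ((((m : ℤ) - ((i : ℕ) : ℤ))) * k)

/-- `f^{M,L}_{N,k}(x) = det(x·I_L − Z^k A^{M,L})`. -/
noncomputable def fMk (m N : ℕ) (k : ℤ) : Polynomial ℂ :=
  (ZmatPow N m k * coinM m).charpoly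

/-- `f^{M,L}_N(x) = ∏_{k=0}^{N-1} f^{M,L}_{N,k}(x)`. -/
noncomputable def fM (m N : ℕ) : Polynomial ℂ :=
  ∏ k ∈ Finset.range N, fMk m N (k : ℤ)

/-- `f^{F,L}_{N,k}(x) = det(x·I_L − Z^k A^{F,L})`. -/
noncomputable def fFk (m N : ℕ) (k : ℤ) : Polynomial ℂ :=
  (ZmatPow N m k * coinF m).charpoly

/-- `f^{F,L}_N(x) = ∏_{k=0}^{N-1} f^{F,L}_{N,k}(x)`. -/
noncomputable def fF (m N : ℕ) : Polynomial ℂ :=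
  ∏ k ∈ Finset.range N, fFk m N (k : ℤ)

/-!
Let `J` be the all-ones matrix, `P` the reversal permutation matrix and `G = (2/L) J - 1`, so that
`A^{F,L} = P G`; both `P` and `G` are involutions and they commute. For `D = Z^k` we have
`P D = D⁻¹ P`, hence `(D P G)² = (D G D⁻¹) G` is a product of two involutions, and it squares to `1`
as soon as these commute, that is, as soon as `J` commutes with `D J D⁻¹`. The diagonal entries of
`D` are powers of `w = ζ_L^k`, closed under inversion; since `w^L = 1`, their sum `s` is fixed under
multiplication by each of them, which gives `J (D J D⁻¹) = s J = (D J D⁻¹) J`.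
-/

theorem pow_four_eq_one_of_commute_conj {M : Type*} [Monoid M] {d e p g : M}
    (hde : d * e = 1) (hed : e * d = 1) (hp : p * p = 1) (hg : g * g = 1) (hpg : Commute p g)
    (hpd : p * d = e * p) (hgd : Commute g (d * g * e)) : (d * (p * g)) ^ 4 = 1 := by
  have hsq : (d * (p * g)) ^ 2 = d * g * e * g :=
    calc (d * (p * g)) ^ 2 = d * (g * p) * (d * (p * g)) := by rw [sq, hpg.eq]
      _ = d * g * (p * d) * p * g := by simp only [mul_assoc]
      _ = d * g * e * (p * p) * g := by rw [hpd]; simp only [mul_assoc]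
      _ = d * g * e * g := by rw [hp, mul_one]
  have hconj : (d * g * e) ^ 2 = 1 :=
    calc (d * g * e) ^ 2 = d * g * (e * d) * g * e := by simp only [sq, mul_assoc]
      _ = d * (g * g) * e := by rw [hed, mul_one, mul_assoc d]
      _ = 1 := by rw [hg, mul_one, hde]
  calc (d * (p * g)) ^ 4 = (d * g * e * g) ^ 2 := by rw [← hsq, ← pow_mul]
    _ = (d * g * e) ^ 2 * g ^ 2 := hgd.symm.mul_pow 2
    _ = 1 := by rw [hconj, sq, hg, mul_one]

section Coin

variable {n R : Type*} [Fintype n] [DecidableEq n] [CommRing R]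

theorem permMatrix_mul_diagonal_of_apply_eq_inv {σ : Equiv.Perm n} {v : n → Rˣ}
    (hv : ∀ i, v (σ i) = (v i)⁻¹) :
    σ.permMatrix R * diagonal (fun i => (v i : R)) =
      diagonal (fun i => (↑(v i)⁻¹ : R)) * σ.permMatrix R := by
  ext i j
  simp only [mul_diagonal, diagonal_mul, ← hv, PEquiv.toMatrix_toPEquiv_apply, Pi.single_apply]
  split_ifs with h <;> simp [h]

theorem diagonal_mul_allOnes_mul_diagonal_apply (v w : n → R) (i j : n) :
    (diagonal v * of 1 * diagonal w : Matrix n n R) i j = v i * w j := by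
  simp

theorem commute_allOnes_diagonal_conj {σ : Equiv.Perm n} {v : n → Rˣ}
    (hv : ∀ i, v (σ i) = (v i)⁻¹) (hs : ∀ i, v i • ∑ j, (v j : R) = ∑ j, (v j : R)) :
    Commute (of 1)
      (diagonal (fun i => (v i : R)) * of 1 * diagonal (fun i => (↑(v i)⁻¹ : R))) := by
  have sum_inv : ∑ j, (↑(v j)⁻¹ : R) = ∑ j, (v j : R) := by
    simp only [← hv]
    exact Equiv.sum_comp σ fun j => (v j : R)
  ext i j
  simp only [mul_apply (M := of 1), mul_apply (N := of 1), diagonal_mul_allOnes_mul_diagonal_apply,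
    of_apply, Pi.one_apply, one_mul, mul_one]
  calc ∑ k, (v k : R) * ↑(v j)⁻¹ = v (σ j) • ∑ k, (v k : R) := by
        rw [← Finset.sum_mul, mul_comm, ← hv, Units.smul_def, smul_eq_mul]
    _ = v i • ∑ k, (v k : R) := by rw [hs, hs]
    _ = ∑ k, v i * (↑(v k)⁻¹ : R) := by
        rw [← Finset.mul_sum, sum_inv, Units.smul_def, smul_eq_mul]

variable (n) in
/-- The Grover coin (of M-type) `c J - 1` on the index set `n`, where `J` is the all-ones matrix.
The weight `c` stands for `2 / |n|`; the condition `c * |n| = 2` is imposed where it is needed,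
which avoids a division in `R`. -/
def groverCoin (c : R) : Matrix n n R := c • of 1 - 1

theorem groverCoin_mul_self {c : R} (hc : c * Fintype.card n = 2) :
    groverCoin n c * groverCoin n c = 1 := by
  have allOnes_mul_self : (of 1 * of 1 : Matrix n n R) = (Fintype.card n : R) • of 1 := by
    ext i j
    simp [Matrix.mul_apply]
  simp only [groverCoin, sub_mul, mul_sub, smul_mul_smul_comm, allOnes_mul_self, smul_smul,
    mul_assoc, hc, one_mul, mul_one]
  module

theorem commute_permMatrix_groverCoin (σ : Equiv.Perm n) (c : R) :
    Commute (σ.permMatrix R) (groverCoin n c) := by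
  ext i j
  simp [groverCoin, PEquiv.toMatrix_toPEquiv_mul, PEquiv.mul_toMatrix_toPEquiv, one_apply,
    Equiv.eq_symm_apply]

theorem commute_groverCoin_conj {d e : Matrix n n R} (hde : d * e = 1) (c : R)
    (h : Commute (of 1) (d * of 1 * e)) :
    Commute (groverCoin n c) (d * groverCoin n c * e) := by
  have conj_eq : d * groverCoin n c * e = c • (d * of 1 * e) - 1 := by
    simp only [groverCoin, mul_sub, sub_mul, mul_smul_comm, smul_mul_assoc, mul_one, hde]
  rw [conj_eq, groverCoin]
  exact (((h.smul_left c).smul_right c).sub_right (.one_right _)).sub_left (.one_left _)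

theorem diagonal_mul_permMatrix_mul_groverCoin_pow_four {c : R}
    (hc : c * Fintype.card n = 2) {σ : Equiv.Perm n} (hσ : σ * σ = 1) {v : n → Rˣ}
    (hv : ∀ i, v (σ i) = (v i)⁻¹) (hs : ∀ i, v i • ∑ j, (v j : R) = ∑ j, (v j : R)) :
    (diagonal (fun i => (v i : R)) * (σ.permMatrix R * groverCoin n c)) ^ 4 = 1 := by
  have hde : diagonal (fun i => (v i : R)) * diagonal (fun i => (↑(v i)⁻¹ : R)) = 1 := by simp
  exact pow_four_eq_one_of_commute_conj hde (mul_eq_one_comm.mp hde)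
    (by rw [← permMatrix_mul, hσ, permMatrix_one])
    (groverCoin_mul_self hc)
    (commute_permMatrix_groverCoin σ c)
    (permMatrix_mul_diagonal_of_apply_eq_inv hv)
    (commute_groverCoin_conj hde c (commute_allOnes_diagonal_conj hv hs))

end Coin

theorem zpow_smul_sum_zpow_sub_of_pow_eq_one {R : Type*} [CommRing R] {w : Rˣ} {n : ℕ}
    (hw : w ^ n = 1) (a k : ℤ) :
    w ^ k • ∑ i : Fin n, ((w ^ (a - (i : ℕ)) : Rˣ) : R) =
      ∑ i : Fin n, ((w ^ (a - (i : ℕ)) : Rˣ) : R) := by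
  set s := ∑ i : Fin n, ((w ^ (a - (i : ℕ)) : Rˣ) : R) with hs
  have s_eq : s = ↑(w ^ a) * ∑ i ∈ Finset.range n, (↑w⁻¹ : R) ^ i := by
    rw [hs, ← Fin.sum_univ_eq_sum_range, Finset.mul_sum]
    simp [_root_.zpow_sub]
  have inv_mem : w⁻¹ ∈ MulAction.stabilizer Rˣ s := by
    have hgeom : (∑ i ∈ Finset.range n, (↑w⁻¹ : R) ^ i) * (↑w⁻¹ - 1) = 0 := by
      rw [geom_sum_mul, ← Units.val_pow_eq_pow_val, inv_pow, hw, inv_one, Units.val_one, sub_self]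
    rw [MulAction.mem_stabilizer_iff, Units.smul_def, smul_eq_mul, s_eq]
    linear_combination (↑(w ^ a) : R) * hgeom
  exact MulAction.mem_stabilizer_iff.mp (zpow_mem (inv_mem_iff.mp inv_mem) k)

theorem stmt16_general {R : Type*} [CommRing R] {m : ℕ} {c : R} (hc : c * (2 * m + 1) = 2)
    {w : Rˣ} (hw : w ^ (2 * m + 1) = 1) :
    (diagonal (fun i : Fin (2 * m + 1) => ((w ^ ((m : ℤ) - (i : ℕ)) : Rˣ) : R)) *
      ((Fin.revPerm : Equiv.Perm (Fin (2 * m + 1))).permMatrix R * groverCoin _ c)) ^ 4 = 1 := by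
  refine diagonal_mul_permMatrix_mul_groverCoin_pow_four (by simpa using hc)
    (Equiv.ext fun i => Fin.rev_rev i) (fun i => ?_)
    (fun i => zpow_smul_sum_zpow_sub_of_pow_eq_one hw m _)
  rw [← _root_.zpow_neg, Fin.revPerm_apply, Fin.val_rev]
  congr 1
  omega

theorem two_mul_natCast_add_one_ne_zero (m : ℕ) : 2 * (m : ℂ) + 1 ≠ 0 := by
  exact_mod_cast (2 * m).succ_ne_zero

theorem coinF_eq_permMatrix_mul_groverCoin (m : ℕ) :
    coinF m = (Fin.revPerm : Equiv.Perm (Fin (2 * m + 1))).permMatrix ℂ *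
      groverCoin _ (2 / (2 * (m : ℂ) + 1)) := by
  have hL := two_mul_natCast_add_one_ne_zero m
  ext i j
  have hij : (i : ℕ) + j = 2 * m ↔ i.rev = j := by rw [Fin.ext_iff, Fin.val_rev]; omega
  rw [PEquiv.toMatrix_toPEquiv_mul]
  by_cases h : i.rev = j
  · simp only [coinF, groverCoin, hij, h, if_true, submatrix_apply, Fin.revPerm_apply, id,
      Matrix.sub_apply, Matrix.smul_apply, of_apply, Pi.one_apply, one_apply_eq, smul_eq_mul,
      mul_one]
    field_simp
    ring
  · simp [coinF, groverCoin, hij, h]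

theorem zetaN_ne_zero (N : ℕ) : zetaN N ≠ 0 := Complex.exp_ne_zero _

/-- `ζ_N` as a unit of `ℂ`, the form in which roots of unity enter over a commutative ring. -/
noncomputable def zetaUnit (N : ℕ) : ℂˣ := Units.mk0 (zetaN N) (zetaN_ne_zero N)

theorem zetaUnit_zpow_pow_self {N : ℕ} (hN : N ≠ 0) (k : ℤ) : (zetaUnit N ^ k) ^ N = 1 := by
  have hζ : zetaUnit N ^ N = 1 :=
    Units.ext <| by simpa using! (Complex.isPrimitiveRoot_exp N hN).pow_eq_one
  rw [← zpow_natCast, _root_.zpow_comm, zpow_natCast, hζ, _root_.one_zpow]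

theorem ZmatPow_eq_diagonal (N m : ℕ) (k : ℤ) :
    ZmatPow N m k = diagonal fun i : Fin (2 * m + 1) =>
      (((zetaUnit N ^ k) ^ ((m : ℤ) - (i : ℕ)) : ℂˣ) : ℂ) := by
  simp [ZmatPow, zetaUnit, ← _root_.zpow_mul, mul_comm k]

/-- For odd `L = 2m+1 ≥ 3` and every `k ∈ ℤ`, `(Z^k A^{F,L})^4 = I_L`,
where `Z = diag(ζ_L^m, …, ζ_L^{−m})`. -/
theorem stmt16 (m : ℕ) (hm : 1 ≤ m) :
    ∀ k : ℤ, (ZmatPow (2*m+1) m k * coinF m) ^ 4 = 1 := by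
  intro k
  rw [ZmatPow_eq_diagonal, coinF_eq_permMatrix_mul_groverCoin]
  exact stmt16_general (div_mul_cancel₀ _ (two_mul_natCast_add_one_ne_zero m))
    (zetaUnit_zpow_pow_self (2 * m).succ_ne_zero k)
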